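/- Let p be a positive integer, let J ⊆ Δ, let λ ∈ C_ℤ, let w1, w2 ∈ ᴶW, let w ∈ W_J, and let σ ∈ ℤΦ. If w1·λ = (w w2)·λ + pσ, then σ = 0, w is the identity, and w1 = w2. -/

import Mathlib

/-!
Put `x = λ + ρ`, so that the hypothesis reads `w₁ x = w w₂ x + p σ` and `|⟨x, γ∨⟩| < p` for every
root `γ`.

*`σ = 0`.* Pairing with `β∨` and using the invariance of the pairing under `W`, one gets
`|p ⟨σ, β∨⟩| < 2p`, so the integer `⟨σ, β∨⟩` is less than `2` for every root `β`. An element of the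
root lattice with this property vanishes: write it as a sum of `k` roots; if it is nonzero, some
summand `β` has `⟨σ, β∨⟩ = 1`, and `σ - β = s_β σ` is a sum of `k - 1` roots with the same property.

*`w = 1`.* That `w₁, w₂ ∈ ᴶW` means that `w₁ x` and `w₂ x` both lie in the open dominant chamber of
the root system `Φ_J` with base `J`. Now `w₁ x = w (w₂ x)` with `w ∈ W_J`, and a Weyl group element
carrying a point of the open chamber to another one is trivial.

*`w₁ = w₂`.* Since `w₁ x = w₂ x`, the same fact applies to `w₂⁻¹ w₁` and the root system `Φ`.
-/

open scoped RealInnerProductSpace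

namespace PaperDNN

variable {E : Type*} [NormedAddCommGroup E] [InnerProductSpace ℝ E]

/-- The coroot pairing `⟨x, α∨⟩ = 2⟪x,α⟫/⟪α,α⟫`. -/
noncomputable def pair (x a : E) : ℝ := 2 * ⟪x, a⟫ / ⟪a, a⟫

/-- `Φ` is a reduced irreducible root system in the Euclidean space `E`. -/
structure IsRootSystem (Φ : Finset E) : Prop where
  nonempty : Φ.Nonempty
  ne_zero : ∀ α ∈ Φ, α ≠ 0
  span_top : Submodule.span ℝ (Φ : Set E) = ⊤
  reduced : ∀ α ∈ Φ, ∀ t : ℝ, t • α ∈ Φ → t = 1 ∨ t = -1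
  reflect_mem : ∀ α ∈ Φ, ∀ β ∈ Φ, β - pair β α • α ∈ Φ
  pair_int : ∀ α ∈ Φ, ∀ β ∈ Φ, ∃ n : ℤ, pair β α = (n : ℝ)
  irred : ∀ S T : Set E, S ∪ T = (Φ : Set E) → S.Nonempty → T.Nonempty →
      (∀ a ∈ S, ∀ b ∈ T, ⟪a, b⟫ = 0) → False

/-- `Δ` is a base of simple roots for `Φ`: every root is a nonnegative or
nonpositive integral combination of the simple roots. -/
structure IsBase (Φ Δ : Finset E) : Prop where
  subset : Δ ⊆ Φ
  indep : LinearIndependent ℝ (fun a : {x // x ∈ Δ} => (a : E))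
  root_decomp : ∀ β ∈ Φ, (∃ c : E → ℕ, β = ∑ α ∈ Δ, (c α : ℝ) • α) ∨
      (∃ c : E → ℕ, β = -(∑ α ∈ Δ, (c α : ℝ) • α))

open Classical in
/-- The positive roots `Φ⁺` of `Φ` with respect to the base `Δ`. -/
noncomputable def posRoots (Φ Δ : Finset E) : Finset E :=
  Φ.filter fun β => ∃ c : E → ℕ, β = ∑ α ∈ Δ, (c α : ℝ) • α

/-- `ρ`, one-half the sum of the positive roots. -/
noncomputable def rho (Φ Δ : Finset E) : E := (2⁻¹ : ℝ) • ∑ β ∈ posRoots Φ Δ, β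

/-- The Weyl group of `Φ`, the subgroup of `GL(E)` generated by the reflections
`s_α : x ↦ x − ⟨x,α∨⟩α` in the roots `α ∈ Φ`.  Applied to a subset `J` of the
simple roots it yields the parabolic subgroup `W_J`. -/
def Weyl (Φ : Finset E) : Subgroup (E ≃ₗ[ℝ] E) :=
  Subgroup.closure { w : E ≃ₗ[ℝ] E | ∃ α ∈ Φ, ∀ x, w x = x - pair x α • α }

/-- The dot action `w·λ = w(λ+ρ) − ρ`. -/
noncomputable def dotAct (Φ Δ : Finset E) (w : E ≃ₗ[ℝ] E) (lam : E) : E :=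
  w (lam + rho Φ Δ) - rho Φ Δ

/-- The weight lattice `X = {λ ∈ E : ⟨λ,α∨⟩ ∈ ℤ for all α ∈ Φ}`. -/
def weightLattice (Φ : Finset E) : Set E :=
  { lam | ∀ α ∈ Φ, ∃ n : ℤ, pair lam α = (n : ℝ) }

/-- The root lattice `ℤΦ`. -/
def rootLattice (Φ : Finset E) : AddSubgroup E := AddSubgroup.closure (Φ : Set E)

/-- The bottom `p`-alcove `C_ℤ = {λ ∈ X : 0 < ⟨λ+ρ,β∨⟩ < p for all β ∈ Φ⁺}`. -/
def bottomAlcove (Φ Δ : Finset E) (p : ℕ) : Set E :=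
  { lam ∈ weightLattice Φ | ∀ β ∈ posRoots Φ Δ,
      0 < pair (lam + rho Φ Δ) β ∧ pair (lam + rho Φ Δ) β < (p : ℝ) }

/-- The closure `C̄_ℤ = {λ ∈ X : 0 ≤ ⟨λ+ρ,β∨⟩ ≤ p for all β ∈ Φ⁺}` of the
bottom `p`-alcove. -/
def closedAlcove (Φ Δ : Finset E) (p : ℕ) : Set E :=
  { lam ∈ weightLattice Φ | ∀ β ∈ posRoots Φ Δ,
      0 ≤ pair (lam + rho Φ Δ) β ∧ pair (lam + rho Φ Δ) β ≤ (p : ℝ) }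

/-- Membership in `X⁺`, the set of dominant weights. -/
def isDominant (Φ Δ : Finset E) (lam : E) : Prop :=
  lam ∈ weightLattice Φ ∧ ∀ α ∈ Δ, 0 ≤ pair lam α

/-- `a₀` is the highest short root of `Φ`: a root of minimal length such that
every root of the same length is `≤ a₀` (their difference is a nonnegative
integral combination of simple roots). -/
structure IsHighestShortRoot (Φ Δ : Finset E) (a₀ : E) : Prop where
  mem : a₀ ∈ Φ
  short : ∀ β ∈ Φ, ⟪a₀, a₀⟫ ≤ ⟪β, β⟫
  highest : ∀ β ∈ Φ, ⟪β, β⟫ = ⟪a₀, a₀⟫ →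
      ∃ c : E → ℕ, a₀ - β = ∑ α ∈ Δ, (c α : ℝ) • α

/-- A reduced crystallographic root system in its span: `IsRootSystem` without the requirements
that `Φ` be nonempty, irreducible and spanning. Unlike those, these conditions pass from `Φ` to the
subsystems `Φ_J`. -/
structure IsReducedRootSystem (Φ : Finset E) : Prop where
  ne_zero : ∀ α ∈ Φ, α ≠ 0
  reduced : ∀ α ∈ Φ, ∀ t : ℝ, t • α ∈ Φ → t = 1 ∨ t = -1
  reflect_mem : ∀ α ∈ Φ, ∀ β ∈ Φ, β - pair β α • α ∈ Φ
  pair_int : ∀ α ∈ Φ, ∀ β ∈ Φ, ∃ n : ℤ, pair β α = (n : ℝ)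

lemma IsRootSystem.isReducedRootSystem {Φ : Finset E} (hΦ : IsRootSystem Φ) :
    IsReducedRootSystem Φ :=
  ⟨hΦ.ne_zero, hΦ.reduced, hΦ.reflect_mem, hΦ.pair_int⟩

/-! ### The coroot pairing and reflections -/

lemma pair_add_left (x y a : E) : pair (x + y) a = pair x a + pair y a := by
  simp only [pair, inner_add_left, mul_add, add_div]

lemma pair_smul_left (t : ℝ) (x a : E) : pair (t • x) a = t * pair x a := by
  simp only [pair, real_inner_smul_left, mul_left_comm, mul_div_assoc]

lemma pair_neg_left (x a : E) : pair (-x) a = -pair x a := by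
  simp only [pair, inner_neg_left, mul_neg, neg_div]

lemma pair_neg_right (x a : E) : pair x (-a) = -pair x a := by
  simp only [pair, inner_neg_right, inner_neg_left, neg_neg, mul_neg, neg_div]

lemma pair_pos_iff {x a : E} (ha : a ≠ 0) : 0 < pair x a ↔ 0 < ⟪x, a⟫ := by
  rw [pair, div_pos_iff_of_pos_right (real_inner_self_pos.mpr ha),
    mul_pos_iff_of_pos_left two_pos]

/-- The reflection `s_a : x ↦ x - ⟨x, a∨⟩ a`, as the orthogonal reflection in the hyperplane `a^⊥`.
For `a = 0` it is the identity. -/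
noncomputable def rootReflection (a : E) : E ≃ₗ[ℝ] E :=
  (ℝ ∙ a)ᗮ.reflection.toLinearEquiv

lemma rootReflection_apply (a x : E) : rootReflection a x = x - pair x a • a := by
  change (ℝ ∙ a)ᗮ.reflection x = _
  rw [Submodule.reflection_orthogonal_apply, Submodule.reflection_singleton_apply, pair,
    real_inner_self_eq_norm_sq, real_inner_comm, mul_div_assoc, mul_smul, neg_sub]
  simp [two_smul]

lemma rootReflection_rootReflection (a x : E) : rootReflection a (rootReflection a x) = x :=
  (ℝ ∙ a)ᗮ.reflection_reflection x

lemma rootReflection_mul_self (a : E) : rootReflection a * rootReflection a = 1 :=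
  LinearEquiv.ext (rootReflection_rootReflection a)

lemma rootReflection_self (a : E) : rootReflection a a = -a :=
  Submodule.reflection_orthogonalComplement_singleton_eq_neg a

lemma rootReflection_neg (a : E) : rootReflection (-a) = rootReflection a := by
  ext x
  rw [rootReflection_apply, rootReflection_apply, pair_neg_right, neg_smul_neg]

lemma inner_rootReflection (a x y : E) : ⟪rootReflection a x, rootReflection a y⟫ = ⟪x, y⟫ :=
  (ℝ ∙ a)ᗮ.reflection.inner_map_map x y

/-! ### The group generated by the reflections in a set of vectors -/

section Weyl

variable {S T : Finset E} {w : E ≃ₗ[ℝ] E}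

lemma rootReflection_mem_weyl {a : E} (ha : a ∈ S) : rootReflection a ∈ Weyl S :=
  Subgroup.subset_closure ⟨a, ha, rootReflection_apply a⟩

@[elab_as_elim]
lemma weyl_induction {motive : ∀ w : E ≃ₗ[ℝ] E, w ∈ Weyl S → Prop} (one : motive 1 (one_mem _))
    (reflection_mul : ∀ a (ha : a ∈ S) v hv, motive v hv →
      motive (rootReflection a * v) (mul_mem (rootReflection_mem_weyl ha) hv))
    (hw : w ∈ Weyl S) : motive w hw := by
  have eq_rootReflection {s : E ≃ₗ[ℝ] E} {a : E} (hs : ∀ x, s x = x - pair x a • a) :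
      s = rootReflection a :=
    LinearEquiv.ext fun x => (hs x).trans (rootReflection_apply a x).symm
  induction hw using Subgroup.closure_induction_left with
  | one => exact one
  | mul_left s hs v hv ih =>
    obtain ⟨a, ha, hs⟩ := hs
    obtain rfl := eq_rootReflection hs
    exact reflection_mul a ha v hv ih
  | inv_mul_cancel s hs v hv ih =>
    obtain ⟨a, ha, hs⟩ := hs
    obtain rfl := eq_rootReflection hs
    simpa only [inv_eq_of_mul_eq_one_left (rootReflection_mul_self a)]
      using reflection_mul a ha v hv ih

lemma weyl_le {G : Subgroup (E ≃ₗ[ℝ] E)} (h : ∀ a ∈ S, rootReflection a ∈ G) : Weyl S ≤ G :=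
  fun _ hw => weyl_induction (motive := fun w _ => w ∈ G) (one_mem G)
    (fun a ha _ _ => mul_mem (h a ha)) hw

lemma weyl_mono (h : S ⊆ T) : Weyl S ≤ Weyl T :=
  weyl_le fun _ ha => rootReflection_mem_weyl (h ha)

lemma exists_list_of_mem_weyl (hw : w ∈ Weyl S) :
    ∃ L : List E, (∀ a ∈ L, a ∈ S) ∧ (L.map rootReflection).prod = w := by
  induction hw using weyl_induction with
  | one => exact ⟨[], by simp, by simp⟩
  | reflection_mul a ha v _ ih =>
    obtain ⟨L, hL, rfl⟩ := ih
    exact ⟨a :: L, List.forall_mem_cons.mpr ⟨ha, hL⟩, by simp⟩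

lemma prod_map_rootReflection_mem_weyl {L : List E} (hL : ∀ a ∈ L, a ∈ S) :
    (L.map rootReflection).prod ∈ Weyl S :=
  list_prod_mem (List.forall_mem_map.mpr fun a ha => rootReflection_mem_weyl (hL a ha))

lemma inner_map_map_of_mem_weyl (hw : w ∈ Weyl S) (x y : E) : ⟪w x, w y⟫ = ⟪x, y⟫ := by
  induction hw using weyl_induction with
  | one => rfl
  | reflection_mul a _ v _ ih => exact (inner_rootReflection a (v x) (v y)).trans ih

lemma pair_map_map_of_mem_weyl (hw : w ∈ Weyl S) (x y : E) : pair (w x) (w y) = pair x y := by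
  simp only [pair, inner_map_map_of_mem_weyl hw]

lemma pair_map_left_of_mem_weyl (hw : w ∈ Weyl S) (x y : E) : pair (w x) y = pair x (w.symm y) := by
  rw [← pair_map_map_of_mem_weyl hw x, w.apply_symm_apply]

lemma mul_rootReflection_of_mem_weyl (hw : w ∈ Weyl S) (a : E) :
    w * rootReflection a = rootReflection (w a) * w := by
  ext x
  simp only [LinearEquiv.mul_apply, rootReflection_apply, map_sub, map_smul,
    pair_map_map_of_mem_weyl hw]

end Weyl

namespace IsReducedRootSystem

variable {Φ : Finset E} {b : E}

lemma rootReflection_mem (hΦ : IsReducedRootSystem Φ) {a : E} (ha : a ∈ Φ) (hb : b ∈ Φ) :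
    rootReflection a b ∈ Φ :=
  rootReflection_apply a b ▸ hΦ.reflect_mem a ha b hb

lemma neg_mem (hΦ : IsReducedRootSystem Φ) (hb : b ∈ Φ) : -b ∈ Φ :=
  rootReflection_self b ▸ hΦ.rootReflection_mem hb hb

lemma map_mem_of_mem_weyl (hΦ : IsReducedRootSystem Φ) {w : E ≃ₗ[ℝ] E} (hw : w ∈ Weyl Φ)
    (hb : b ∈ Φ) : w b ∈ Φ := by
  induction hw using weyl_induction with
  | one => exact hb
  | reflection_mul a ha v _ ih => exact hΦ.rootReflection_mem ha ih

/-! ### Root lattice elements with small coroot pairings -/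

lemma rootLattice_subset_weightLattice (hΦ : IsReducedRootSystem Φ) :
    (rootLattice Φ : Set E) ⊆ weightLattice Φ := by
  intro s hs b hb
  induction hs using AddSubgroup.closure_induction with
  | mem a ha => exact hΦ.pair_int b hb a ha
  | zero => exact ⟨0, by simp [pair]⟩
  | add x y _ _ hx hy =>
    obtain ⟨m, hm⟩ := hx
    obtain ⟨n, hn⟩ := hy
    exact ⟨m + n, by rw [pair_add_left, hm, hn, Int.cast_add]⟩
  | neg x _ hx =>
    obtain ⟨m, hm⟩ := hx
    exact ⟨-m, by rw [pair_neg_left, hm, Int.cast_neg]⟩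

lemma exists_list_sum_eq (hΦ : IsReducedRootSystem Φ) {s : E} (hs : s ∈ rootLattice Φ) :
    ∃ L : List E, (∀ a ∈ L, a ∈ Φ) ∧ L.sum = s := by
  have union_neg : (Φ ∪ -Φ : Set E) = Φ :=
    Set.union_eq_self_of_subset_right fun a ha => neg_neg a ▸ hΦ.neg_mem ha
  rw [rootLattice, ← AddSubgroup.mem_toAddSubmonoid, AddSubgroup.closure_toAddSubmonoid,
    union_neg] at hs
  exact AddSubmonoid.exists_list_of_mem_closure hs

end IsReducedRootSystem

lemma exists_mem_inner_pos_of_inner_list_sum_pos {x : E} {L : List E} (h : 0 < ⟪x, L.sum⟫) :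
    ∃ b ∈ L, 0 < ⟪x, b⟫ := by
  refine List.exists_lt_of_sum_lt (fun _ => 0) (fun b => ⟪x, b⟫) ?_
  rw [List.map_const', List.sum_replicate, smul_zero]
  exact h.trans_eq (map_list_sum (innerₗ E x) L)

namespace IsReducedRootSystem

variable {Φ : Finset E}

lemma list_sum_eq_zero_of_pair_lt_two (hΦ : IsReducedRootSystem Φ) {L : List E}
    (hL : ∀ a ∈ L, a ∈ Φ) (hlt : ∀ b ∈ Φ, pair L.sum b < 2) : L.sum = 0 := by
  classical
  induction hn : L.length generalizing L with
  | zero => rw [List.length_eq_zero_iff.mp hn, List.sum_nil]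
  | succ n ih =>
    by_contra hne
    obtain ⟨b, hbL, hpos⟩ :=
      exists_mem_inner_pos_of_inner_list_sum_pos (real_inner_self_pos.mpr hne)
    have hb : b ∈ Φ := hL b hbL
    have hmem : L.sum ∈ rootLattice Φ :=
      list_sum_mem fun a ha => AddSubgroup.subset_closure (hL a ha)
    have pair_eq_one : pair L.sum b = 1 := by
      have pair_pos : 0 < pair L.sum b := (pair_pos_iff (hΦ.ne_zero b hb)).mpr hpos
      have pair_lt := hlt b hb
      obtain ⟨k, hk⟩ := hΦ.rootLattice_subset_weightLattice hmem b hb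
      rw [hk] at pair_pos pair_lt ⊢
      norm_cast at pair_pos pair_lt ⊢
      lia
    have sum_erase : (L.erase b).sum = rootReflection b L.sum := by
      rw [rootReflection_apply, pair_eq_one, one_smul, ← List.sum_erase hbL, add_sub_cancel_left]
    refine hne ((rootReflection b).map_eq_zero_iff.mp (sum_erase ▸ ih ?_ ?_ ?_))
    · exact fun a ha => hL a (List.mem_of_mem_erase ha)
    · intro d hd
      rw [sum_erase, pair_map_left_of_mem_weyl (rootReflection_mem_weyl hb)]
      exact hlt _ (hΦ.rootReflection_mem hb hd)
    · rw [List.length_erase_of_mem hbL, hn, Nat.add_sub_cancel]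

lemma eq_zero_of_pair_lt_two (hΦ : IsReducedRootSystem Φ) {s : E} (hs : s ∈ rootLattice Φ)
    (hlt : ∀ b ∈ Φ, pair s b < 2) : s = 0 := by
  obtain ⟨L, hL, rfl⟩ := hΦ.exists_list_sum_eq hs
  exact hΦ.list_sum_eq_zero_of_pair_lt_two hL hlt

end IsReducedRootSystem

/-! ### Positive roots -/

section Base

lemma mem_posRoots {Φ Δ : Finset E} {b : E} :
    b ∈ posRoots Φ Δ ↔ b ∈ Φ ∧ ∃ c : E → ℕ, b = ∑ α ∈ Δ, (c α : ℝ) • α := by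
  classical
  simp only [posRoots, Finset.mem_filter]

lemma exists_linearMap_apply_eq {K V V' ι : Type*} [Field K] [AddCommGroup V] [Module K V]
    [AddCommGroup V'] [Module K V'] {v : ι → V} (hv : LinearIndependent K v) (g : ι → V') :
    ∃ f : V →ₗ[K] V', ∀ i, f (v i) = g i := by
  obtain ⟨f, hf⟩ := ((Module.Basis.span hv).constr K g).exists_extend
  refine ⟨f, fun i => ?_⟩
  have h := LinearMap.congr_fun hf (Module.Basis.span hv i)
  rwa [Module.Basis.constr_basis, LinearMap.comp_apply, Submodule.subtype_apply,
    Module.Basis.span_apply] at h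

variable {Φ Δ : Finset E} {a b : E}

namespace IsBase

lemma exists_coord (hΔ : IsBase Φ Δ) {e : E} (he : e ∈ Δ) :
    ∃ f : E →ₗ[ℝ] ℝ, (∀ a ∈ Δ, a ≠ e → f a = 0) ∧
      ∀ c : E → ℝ, f (∑ α ∈ Δ, c α • α) = c e := by
  classical
  obtain ⟨f, hf⟩ := exists_linearMap_apply_eq hΔ.indep fun a => if (a : E) = e then (1 : ℝ) else 0
  have apply_simple : ∀ a ∈ Δ, f a = if a = e then 1 else 0 := fun a ha => hf ⟨a, ha⟩
  refine ⟨f, fun a ha hae => by rw [apply_simple a ha, if_neg hae], fun c => ?_⟩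
  rw [map_sum, Finset.sum_eq_single_of_mem e he]
  · simp [apply_simple e he]
  · intro a ha hae
    simp [apply_simple a ha, hae]

lemma exists_pos_on_posRoots (hΦ : IsReducedRootSystem Φ) (hΔ : IsBase Φ Δ) :
    ∃ h : E →ₗ[ℝ] ℝ, ∀ b ∈ posRoots Φ Δ, 0 < h b := by
  obtain ⟨h, hh⟩ := exists_linearMap_apply_eq hΔ.indep fun _ => (1 : ℝ)
  refine ⟨h, fun b hb => ?_⟩
  obtain ⟨hbΦ, c, rfl⟩ := mem_posRoots.mp hb
  have height_eq : h (∑ α ∈ Δ, (c α : ℝ) • α) = ∑ α ∈ Δ, (c α : ℝ) := by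
    rw [map_sum]
    refine Finset.sum_congr rfl fun α hα => ?_
    rw [map_smul, hh ⟨α, hα⟩, smul_eq_mul, mul_one]
  obtain ⟨α, hα, hne⟩ := Finset.exists_ne_zero_of_sum_ne_zero (hΦ.ne_zero _ hbΦ)
  rw [height_eq]
  exact Finset.sum_pos' (fun _ _ => Nat.cast_nonneg _)
    ⟨α, hα, (Nat.cast_nonneg _).lt_of_ne' (left_ne_zero_of_smul hne)⟩

lemma mem_posRoots_of_mem (hΔ : IsBase Φ Δ) (ha : a ∈ Δ) : a ∈ posRoots Φ Δ := by
  classical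
  exact mem_posRoots.mpr ⟨hΔ.subset ha, fun x => if x = a then 1 else 0, by simp [ha]⟩

lemma mem_posRoots_or_neg_mem (hΦ : IsReducedRootSystem Φ) (hΔ : IsBase Φ Δ) (hb : b ∈ Φ) :
    b ∈ posRoots Φ Δ ∨ -b ∈ posRoots Φ Δ := by
  rcases hΔ.root_decomp b hb with hpos | ⟨c, hc⟩
  · exact Or.inl (mem_posRoots.mpr ⟨hb, hpos⟩)
  · exact Or.inr (mem_posRoots.mpr ⟨hΦ.neg_mem hb, c, neg_eq_iff_eq_neg.mpr hc⟩)

lemma neg_notMem_posRoots (hΦ : IsReducedRootSystem Φ) (hΔ : IsBase Φ Δ)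
    (hb : b ∈ posRoots Φ Δ) : -b ∉ posRoots Φ Δ := by
  intro hneg
  obtain ⟨h, hpos⟩ := hΔ.exists_pos_on_posRoots hΦ
  have := hpos _ hneg
  rw [map_neg] at this
  linarith [hpos b hb]

lemma exists_coeff_ne_zero (hΦ : IsReducedRootSystem Φ) (hΔ : IsBase Φ Δ) (ha : a ∈ Δ)
    {c : E → ℕ} (hb : ∑ α ∈ Δ, (c α : ℝ) • α ∈ Φ) (hne : ∑ α ∈ Δ, (c α : ℝ) • α ≠ a) :
    ∃ e ∈ Δ, e ≠ a ∧ c e ≠ 0 := by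
  by_contra! hzero
  have sum_eq : ∑ α ∈ Δ, (c α : ℝ) • α = (c a : ℝ) • a :=
    Finset.sum_eq_single_of_mem a ha fun e he hea => by simp [hzero e he hea]
  rw [sum_eq] at hb hne
  rcases hΦ.reduced a (hΔ.subset ha) _ hb with hone | hneg
  · exact hne (by rw [hone, one_smul])
  · linarith [(c a).cast_nonneg (α := ℝ)]

-- `s_a` changes only the coefficient of `a`, so another nonzero coefficient of `b` stays positive.
lemma rootReflection_mem_posRoots (hΦ : IsReducedRootSystem Φ) (hΔ : IsBase Φ Δ) (ha : a ∈ Δ)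
    (hb : b ∈ posRoots Φ Δ) (hne : b ≠ a) : rootReflection a b ∈ posRoots Φ Δ := by
  obtain ⟨hbΦ, c, rfl⟩ := mem_posRoots.mp hb
  refine (hΔ.mem_posRoots_or_neg_mem hΦ
    (hΦ.rootReflection_mem (hΔ.subset ha) hbΦ)).resolve_right fun hneg => ?_
  obtain ⟨e, he, hea, hce⟩ := hΔ.exists_coeff_ne_zero hΦ ha hbΦ hne
  obtain ⟨f, hf, hcoord⟩ := hΔ.exists_coord he
  obtain ⟨-, d, hd⟩ := mem_posRoots.mp hneg
  have coeff_eq : -(c e : ℝ) = d e := by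
    have := congrArg f hd
    rwa [rootReflection_apply, map_neg, map_sub, map_smul, hf a ha hea.symm, smul_zero, sub_zero,
      hcoord (fun α => c α), hcoord (fun α => d α)] at this
  have : (0 : ℝ) < c e := Nat.cast_pos.mpr (Nat.pos_of_ne_zero hce)
  linarith [(d e).cast_nonneg (α := ℝ)]

/-! ### Generation by simple reflections -/

lemma exists_mem_pair_pos (hΦ : IsReducedRootSystem Φ) (hΔ : IsBase Φ Δ)
    (hb : b ∈ posRoots Φ Δ) : ∃ a ∈ Δ, 0 < pair b a := by
  obtain ⟨hbΦ, c, hc⟩ := mem_posRoots.mp hb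
  have sum_pos : 0 < ∑ α ∈ Δ, (c α : ℝ) * ⟪b, α⟫ := by
    have := real_inner_self_pos.mpr (hΦ.ne_zero b hbΦ)
    nth_rewrite 2 [hc] at this
    simpa only [inner_sum, real_inner_smul_right] using this
  obtain ⟨a, ha, hpos⟩ :=
    Finset.exists_lt_of_sum_lt (f := fun _ => (0 : ℝ)) (by simpa using sum_pos)
  exact ⟨a, ha, (pair_pos_iff (hΦ.ne_zero a (hΔ.subset ha))).mpr
    (pos_of_mul_pos_right hpos (Nat.cast_nonneg _))⟩

-- A root of minimal height among the positive roots in the orbit of `b` is simple.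
lemma exists_weyl_map_simple_eq (hΦ : IsReducedRootSystem Φ) (hΔ : IsBase Φ Δ)
    (hb : b ∈ posRoots Φ Δ) : ∃ v ∈ Weyl Δ, ∃ a ∈ Δ, v a = b := by
  classical
  obtain ⟨h, hpos⟩ := hΔ.exists_pos_on_posRoots hΦ
  obtain ⟨d, hd, hmin⟩ := ((posRoots Φ Δ).filter fun d => ∃ v ∈ Weyl Δ, v d = b).exists_min_image h
    ⟨b, Finset.mem_filter.mpr ⟨hb, 1, one_mem _, rfl⟩⟩
  obtain ⟨hdpos, v, hv, hvd⟩ := Finset.mem_filter.mp hd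
  obtain ⟨a, ha, hda⟩ := hΔ.exists_mem_pair_pos hΦ hdpos
  obtain rfl | hne := eq_or_ne d a
  · exact ⟨v, hv, d, ha, hvd⟩
  have height_le := hmin (rootReflection a d) <| Finset.mem_filter.mpr
    ⟨hΔ.rootReflection_mem_posRoots hΦ ha hdpos hne, v * rootReflection a,
      mul_mem hv (rootReflection_mem_weyl ha),
      (congrArg v (rootReflection_rootReflection a d)).trans hvd⟩
  rw [rootReflection_apply, map_sub, map_smul, smul_eq_mul] at height_le
  linarith [mul_pos hda (hpos a (hΔ.mem_posRoots_of_mem ha))]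

lemma weyl_le_weyl_base (hΦ : IsReducedRootSystem Φ) (hΔ : IsBase Φ Δ) : Weyl Φ ≤ Weyl Δ := by
  have of_pos : ∀ b ∈ posRoots Φ Δ, rootReflection b ∈ Weyl Δ := by
    intro b hb
    obtain ⟨v, hv, a, ha, rfl⟩ := hΔ.exists_weyl_map_simple_eq hΦ hb
    rw [eq_mul_inv_of_mul_eq (mul_rootReflection_of_mem_weyl hv a).symm]
    exact mul_mem (mul_mem hv (rootReflection_mem_weyl ha)) (inv_mem hv)
  refine weyl_le fun b hb => ?_
  rcases hΔ.mem_posRoots_or_neg_mem hΦ hb with hpos | hneg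
  · exact of_pos b hpos
  · exact rootReflection_neg b ▸ of_pos _ hneg

/-! ### Freeness of the action on the open chamber -/

-- The exchange property: the deleted letter is the one at which `a` turns negative.
lemma exists_sublist_prod_eq_prod_mul (hΦ : IsReducedRootSystem Φ) (hΔ : IsBase Φ Δ) (ha : a ∈ Δ)
    {L : List E} (hL : ∀ d ∈ L, d ∈ Δ) (hneg : (L.map rootReflection).prod a ∉ posRoots Φ Δ) :
    ∃ M : List E, M.Sublist L ∧ M.length < L.length ∧
      (M.map rootReflection).prod = (L.map rootReflection).prod * rootReflection a := by
  induction L with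
  | nil => exact absurd (hΔ.mem_posRoots_of_mem ha) hneg
  | cons e L ih =>
    obtain ⟨he, hL⟩ := List.forall_mem_cons.mp hL
    rw [List.map_cons, List.prod_cons] at hneg ⊢
    by_cases hpos : (L.map rootReflection).prod a ∈ posRoots Φ Δ
    · have map_eq : (L.map rootReflection).prod a = e := by
        by_contra hne
        exact hneg (hΔ.rootReflection_mem_posRoots hΦ he hpos hne)
      refine ⟨L, List.sublist_cons_self e L, by simp, ?_⟩
      rw [mul_assoc, mul_rootReflection_of_mem_weyl (prod_map_rootReflection_mem_weyl hL), map_eq,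
        ← mul_assoc, rootReflection_mul_self, one_mul]
    · obtain ⟨M, hML, hlen, hprod⟩ := ih hL hpos
      exact ⟨e :: M, hML.cons_cons e, by simpa using hlen, by simp [hprod, mul_assoc]⟩

lemma prod_eq_one_of_forall_map_mem_posRoots (hΦ : IsReducedRootSystem Φ) (hΔ : IsBase Φ Δ)
    {L : List E} (hL : ∀ d ∈ L, d ∈ Δ)
    (hpos : ∀ b ∈ posRoots Φ Δ, (L.map rootReflection).prod b ∈ posRoots Φ Δ) :
    (L.map rootReflection).prod = 1 := by
  induction hn : L.length using Nat.strong_induction_on generalizing L with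
  | _ n ih =>
  obtain rfl | ⟨M, a, rfl⟩ := L.eq_nil_or_concat'
  · rfl
  obtain ⟨hM, ha⟩ : (∀ d ∈ M, d ∈ Δ) ∧ a ∈ Δ := by
    simpa [or_imp, forall_and] using hL
  have prod_concat : ((M ++ [a]).map rootReflection).prod =
      (M.map rootReflection).prod * rootReflection a := by simp
  have hneg : (M.map rootReflection).prod a ∉ posRoots Φ Δ := by
    intro hMa
    have := hpos a (hΔ.mem_posRoots_of_mem ha)
    rw [prod_concat, LinearEquiv.mul_apply, rootReflection_self, map_neg] at this
    exact hΔ.neg_notMem_posRoots hΦ hMa this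
  obtain ⟨N, hNM, hlen, hN⟩ := hΔ.exists_sublist_prod_eq_prod_mul hΦ ha hM hneg
  rw [prod_concat, ← hN] at hpos ⊢
  refine ih N.length ?_ (fun d hd => hM d (hNM.subset hd)) hpos rfl
  rw [← hn, List.length_append]
  lia

lemma eq_one_of_forall_map_mem_posRoots (hΦ : IsReducedRootSystem Φ) (hΔ : IsBase Φ Δ)
    {u : E ≃ₗ[ℝ] E} (hu : u ∈ Weyl Δ) (hpos : ∀ b ∈ posRoots Φ Δ, u b ∈ posRoots Φ Δ) :
    u = 1 := by
  obtain ⟨L, hL, rfl⟩ := exists_list_of_mem_weyl hu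
  exact hΔ.prod_eq_one_of_forall_map_mem_posRoots hΦ hL hpos

end IsBase

/-- The open dominant chamber of `Φ` with respect to the base `Δ`. -/
def openChamber (Φ Δ : Finset E) : Set E :=
  {x | ∀ β ∈ posRoots Φ Δ, 0 < pair x β}

namespace IsBase

variable {x : E} {u v : E ≃ₗ[ℝ] E}

lemma eq_one_of_map_mem_openChamber (hΦ : IsReducedRootSystem Φ) (hΔ : IsBase Φ Δ)
    (hu : u ∈ Weyl Δ) (hx : x ∈ openChamber Φ Δ) (hux : u x ∈ openChamber Φ Δ) : u = 1 := by
  refine hΔ.eq_one_of_forall_map_mem_posRoots hΦ hu fun b hb => ?_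
  have hub : u b ∈ Φ := hΦ.map_mem_of_mem_weyl (weyl_mono hΔ.subset hu) (mem_posRoots.mp hb).1
  refine (hΔ.mem_posRoots_or_neg_mem hΦ hub).resolve_right fun hneg => ?_
  have := hux _ hneg
  rw [pair_neg_right, pair_map_map_of_mem_weyl hu] at this
  linarith [hx b hb]

lemma eq_of_map_eq_of_mem_openChamber (hΦ : IsReducedRootSystem Φ) (hΔ : IsBase Φ Δ)
    (hu : u ∈ Weyl Φ) (hv : v ∈ Weyl Φ) (hx : x ∈ openChamber Φ Δ) (huv : u x = v x) :
    u = v := by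
  have fixes : (v⁻¹ * u) x = x := v.symm_apply_eq.mpr huv
  refine (inv_mul_eq_one.mp (hΔ.eq_one_of_map_mem_openChamber hΦ ?_ hx (fixes.symm ▸ hx))).symm
  exact hΔ.weyl_le_weyl_base hΦ (mul_mem (inv_mem hv) hu)

end IsBase

/-! ### The open alcove -/

/-- The real points of the open bottom `p`-alcove, without the shift by `ρ`: `C_ℤ` consists of the
weights `λ` with `λ + ρ` in this set. -/
def openAlcove (Φ Δ : Finset E) (p : ℝ) : Set E :=
  {x | ∀ β ∈ posRoots Φ Δ, 0 < pair x β ∧ pair x β < p}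

section Alcove

variable {p : ℝ} {x : E}

lemma openAlcove_subset_openChamber : openAlcove Φ Δ p ⊆ openChamber Φ Δ :=
  fun _ hx β hβ => (hx β hβ).1

lemma abs_pair_lt_of_mem_openAlcove (hΦ : IsReducedRootSystem Φ) (hΔ : IsBase Φ Δ)
    (hx : x ∈ openAlcove Φ Δ p) (hb : b ∈ Φ) : |pair x b| < p := by
  rcases hΔ.mem_posRoots_or_neg_mem hΦ hb with hpos | hneg
  · obtain ⟨pair_pos, pair_lt⟩ := hx b hpos
    rwa [abs_of_pos pair_pos]
  · obtain ⟨pair_pos, pair_lt⟩ := hx _ hneg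
    rw [pair_neg_right] at pair_pos pair_lt
    rwa [abs_of_neg (neg_pos.mp pair_pos)]

lemma abs_pair_map_lt_of_mem_openAlcove (hΦ : IsReducedRootSystem Φ) (hΔ : IsBase Φ Δ)
    (hx : x ∈ openAlcove Φ Δ p) {u : E ≃ₗ[ℝ] E} (hu : u ∈ Weyl Φ) (hb : b ∈ Φ) :
    |pair (u x) b| < p := by
  rw [pair_map_left_of_mem_weyl hu]
  exact abs_pair_lt_of_mem_openAlcove hΦ hΔ hx (hΦ.map_mem_of_mem_weyl (inv_mem hu) hb)

lemma eq_zero_of_map_eq_map_add_smul (hΦ : IsReducedRootSystem Φ) (hΔ : IsBase Φ Δ)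
    (hx : x ∈ openAlcove Φ Δ p) {u v : E ≃ₗ[ℝ] E} (hu : u ∈ Weyl Φ) (hv : v ∈ Weyl Φ) {σ : E}
    (hσ : σ ∈ rootLattice Φ) (heq : u x = v x + p • σ) : σ = 0 := by
  refine hΦ.eq_zero_of_pair_lt_two hσ fun b hb => ?_
  have hub := abs_pair_map_lt_of_mem_openAlcove hΦ hΔ hx hu hb
  have hvb := abs_pair_map_lt_of_mem_openAlcove hΦ hΔ hx hv hb
  have hp : 0 < p := (abs_nonneg _).trans_lt hub
  rw [heq, pair_add_left, pair_smul_left] at hub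
  refine lt_of_mul_lt_mul_left ?_ hp.le
  linarith [(abs_lt.mp hub).2, (abs_lt.mp hvb).1]

end Alcove

end Base

/-! ### Parabolic subsystems -/

open Classical in
/-- The subsystem `Φ_J = ℤJ ∩ Φ` attached to a set `J` of simple roots. -/
noncomputable def parabolicRoots (Φ J : Finset E) : Finset E :=
  Φ.filter fun β => β ∈ rootLattice J

lemma mem_parabolicRoots {F : Type*} [NormedAddCommGroup F] {Φ J : Finset F} {b : F} :
    b ∈ parabolicRoots Φ J ↔ b ∈ Φ ∧ b ∈ rootLattice J := by
  classical
  simp only [parabolicRoots, Finset.mem_filter]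

section Parabolic

variable {Φ Δ J : Finset E}

lemma IsReducedRootSystem.parabolicRoots (hΦ : IsReducedRootSystem Φ) (J : Finset E) :
    IsReducedRootSystem (parabolicRoots Φ J) where
  ne_zero α hα := hΦ.ne_zero α (mem_parabolicRoots.mp hα).1
  reduced α hα t ht :=
    hΦ.reduced α (mem_parabolicRoots.mp hα).1 t (mem_parabolicRoots.mp ht).1
  reflect_mem α hα β hβ := by
    obtain ⟨hαΦ, hαJ⟩ := mem_parabolicRoots.mp hα
    obtain ⟨hβΦ, hβJ⟩ := mem_parabolicRoots.mp hβ
    refine mem_parabolicRoots.mpr ⟨hΦ.reflect_mem α hαΦ β hβΦ, ?_⟩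
    obtain ⟨n, hn⟩ := hΦ.pair_int α hαΦ β hβΦ
    rw [hn, Int.cast_smul_eq_zsmul]
    exact sub_mem hβJ (zsmul_mem hαJ n)
  pair_int α hα β hβ :=
    hΦ.pair_int α (mem_parabolicRoots.mp hα).1 β (mem_parabolicRoots.mp hβ).1

namespace IsBase

lemma coeff_eq_zero_of_sum_mem_rootLattice (hΔ : IsBase Φ Δ) (hJ : J ⊆ Δ) {c : E → ℝ}
    (hc : ∑ α ∈ Δ, c α • α ∈ rootLattice J) {e : E} (he : e ∈ Δ) (heJ : e ∉ J) : c e = 0 := by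
  obtain ⟨f, hf, hcoord⟩ := hΔ.exists_coord he
  have rootLattice_le : rootLattice J ≤ f.toAddMonoidHom.ker :=
    (AddSubgroup.closure_le _).mpr fun a ha => hf a (hJ ha) (ne_of_mem_of_not_mem ha heJ)
  exact (hcoord c).symm.trans (rootLattice_le hc)

lemma sum_eq_sum_of_sum_mem_rootLattice (hΔ : IsBase Φ Δ) (hJ : J ⊆ Δ) {c : E → ℝ}
    (hc : ∑ α ∈ Δ, c α • α ∈ rootLattice J) : ∑ α ∈ Δ, c α • α = ∑ α ∈ J, c α • α :=
  (Finset.sum_subset hJ fun e he heJ => by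
    rw [hΔ.coeff_eq_zero_of_sum_mem_rootLattice hJ hc he heJ, zero_smul]).symm

lemma parabolicRoots (hΔ : IsBase Φ Δ) (hJ : J ⊆ Δ) : IsBase (parabolicRoots Φ J) J where
  subset _ ha := mem_parabolicRoots.mpr ⟨hΔ.subset (hJ ha), AddSubgroup.subset_closure ha⟩
  indep := hΔ.indep.comp (Set.inclusion hJ) (Set.inclusion_injective hJ)
  root_decomp β hβ := by
    obtain ⟨hβΦ, hβJ⟩ := mem_parabolicRoots.mp hβ
    rcases hΔ.root_decomp β hβΦ with ⟨c, rfl⟩ | ⟨c, rfl⟩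
    · exact Or.inl ⟨c, hΔ.sum_eq_sum_of_sum_mem_rootLattice hJ hβJ⟩
    · exact Or.inr ⟨c, congrArg Neg.neg
        (hΔ.sum_eq_sum_of_sum_mem_rootLattice hJ (neg_mem_iff.mp hβJ))⟩

end IsBase

lemma posRoots_parabolicRoots_subset (hJ : J ⊆ Δ) :
    posRoots (parabolicRoots Φ J) J ⊆ posRoots Φ Δ := by
  classical
  intro β hβ
  obtain ⟨hβJ, c, hc⟩ := mem_posRoots.mp hβ
  refine mem_posRoots.mpr
    ⟨(mem_parabolicRoots.mp hβJ).1, fun α => if α ∈ J then c α else 0, ?_⟩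
  rw [hc, ← Finset.sum_subset hJ fun α _ hα => by simp [hα]]
  exact Finset.sum_congr rfl fun α hα => by simp [hα]

lemma map_mem_openChamber_parabolicRoots (hJ : J ⊆ Δ) {x : E} (hx : x ∈ openChamber Φ Δ)
    {w : E ≃ₗ[ℝ] E} (hw : w ∈ Weyl Φ)
    (hwJ : ∀ β ∈ posRoots Φ Δ, β ∈ rootLattice J → w.symm β ∈ posRoots Φ Δ) :
    w x ∈ openChamber (parabolicRoots Φ J) J := by
  intro β hβ
  rw [pair_map_left_of_mem_weyl hw]
  exact hx _ (hwJ β (posRoots_parabolicRoots_subset hJ hβ)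
    (mem_parabolicRoots.mp (mem_posRoots.mp hβ).1).2)

end Parabolic

lemma dotAct_eq_dotAct_add_iff {Φ Δ : Finset E} {u v : E ≃ₗ[ℝ] E} {lam y : E} :
    dotAct Φ Δ u lam = dotAct Φ Δ v lam + y ↔ u (lam + rho Φ Δ) = v (lam + rho Φ Δ) + y := by
  rw [dotAct, dotAct, sub_add_eq_add_sub, sub_left_inj]

theorem statement7_general {Φ Δ J : Finset E} (hΦ : IsReducedRootSystem Φ) (hΔ : IsBase Φ Δ)
    (hJ : J ⊆ Δ) {p : ℝ} {x : E} (hx : x ∈ openAlcove Φ Δ p) {w₁ w₂ : E ≃ₗ[ℝ] E}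
    (hw₁W : w₁ ∈ Weyl Φ) (hw₂W : w₂ ∈ Weyl Φ)
    (hw₁J : ∀ β ∈ posRoots Φ Δ, β ∈ rootLattice J → w₁.symm β ∈ posRoots Φ Δ)
    (hw₂J : ∀ β ∈ posRoots Φ Δ, β ∈ rootLattice J → w₂.symm β ∈ posRoots Φ Δ)
    {w : E ≃ₗ[ℝ] E} (hw : w ∈ Weyl J) {σ : E} (hσ : σ ∈ rootLattice Φ)
    (heq : w₁ x = (w * w₂) x + p • σ) : σ = 0 ∧ w = 1 ∧ w₁ = w₂ := by
  have hwΦ : w ∈ Weyl Φ := weyl_mono (hJ.trans hΔ.subset) hw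
  have hxC : x ∈ openChamber Φ Δ := openAlcove_subset_openChamber hx
  obtain rfl : σ = 0 :=
    eq_zero_of_map_eq_map_add_smul hΦ hΔ hx hw₁W (mul_mem hwΦ hw₂W) hσ heq
  have map_eq : w₁ x = w (w₂ x) := by simpa using heq
  obtain rfl : w = 1 :=
    (hΔ.parabolicRoots hJ).eq_one_of_map_mem_openChamber (hΦ.parabolicRoots J) hw
      (map_mem_openChamber_parabolicRoots hJ hxC hw₂W hw₂J)
      (map_eq ▸ map_mem_openChamber_parabolicRoots hJ hxC hw₁W hw₁J)
  exact ⟨rfl, rfl, hΔ.eq_of_map_eq_of_mem_openChamber hΦ hw₁W hw₂W hxC map_eq⟩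

/-- Let `p` be a positive integer, `J ⊆ Δ`, `λ ∈ C_ℤ`,
`w₁, w₂ ∈ ᴶW`, `w ∈ W_J`, and `σ ∈ ℤΦ`.  If `w₁·λ = (w w₂)·λ + pσ`, then
`σ = 0`, `w = 1`, and `w₁ = w₂`.  (Here `W_J = Weyl J` is the parabolic subgroup
generated by the reflections in the simple roots belonging to `J`.) -/
theorem statement7
    (Φ Δ : Finset E) (hΦ : IsRootSystem Φ) (hΔ : IsBase Φ Δ)
    (p : ℕ) (hp : 0 < p)
    (J : Finset E) (hJ : J ⊆ Δ)
    (lam : E) (hlam : lam ∈ bottomAlcove Φ Δ p)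
    (w₁ w₂ : E ≃ₗ[ℝ] E) (hw₁W : w₁ ∈ Weyl Φ) (hw₂W : w₂ ∈ Weyl Φ)
    (hw₁J : ∀ β ∈ posRoots Φ Δ, β ∈ rootLattice J → w₁.symm β ∈ posRoots Φ Δ)
    (hw₂J : ∀ β ∈ posRoots Φ Δ, β ∈ rootLattice J → w₂.symm β ∈ posRoots Φ Δ)
    (w : E ≃ₗ[ℝ] E) (hw : w ∈ Weyl J)
    (σ : E) (hσ : σ ∈ rootLattice Φ)
    (heq : dotAct Φ Δ w₁ lam = dotAct Φ Δ (w * w₂) lam + (p : ℝ) • σ) :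
    σ = 0 ∧ w = 1 ∧ w₁ = w₂ := by
  exact statement7_general hΦ.isReducedRootSystem hΔ hJ hlam.2 hw₁W hw₂W hw₁J hw₂J hw hσ
    (dotAct_eq_dotAct_add_iff.mp heq)

end PaperDNN
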